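/- Let U be a consistent c.e. theory and 𝒳 a set of sentences. The following are equivalent: (a) U is effectively 𝒳-inseparable; (b) U is effectively essentially 𝒳-creative; (c) U is effectively essentially 𝒳-incomplete; (d) U is effectively if-essentially 𝒳-incomplete. -/

import Mathlib

open FirstOrder FirstOrder.Language

namespace PourEl

/-! ## Recursion-theoretic notions -/

/-- The `i`-th computably enumerable subset of `ℕ` (the domain of the `i`-th
partial computable function). -/
def WSet (i : ℕ) : Set ℕ :=
  {n | ((Denumerable.ofNat Nat.Partrec.Code i).eval n).Dom}

/-- A set of natural numbers is computably enumerable. -/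
def CE (A : Set ℕ) : Prop := ∃ i, A = WSet i

/-- A set of natural numbers is computable. -/
def Comp (A : Set ℕ) : Prop := ComputablePred (· ∈ A)

/-- Disjoint sets `X`, `Y` are computably separable iff some computable set
contains `X` and is disjoint from `Y`. -/
def CompSeparable (X Y : Set ℕ) : Prop :=
  ∃ Z : Set ℕ, Comp Z ∧ X ⊆ Z ∧ Y ∩ Z = ∅

/-- Computable inseparability. -/
def CompInseparable (X Y : Set ℕ) : Prop := ¬ CompSeparable X Y

/-- `Z` and `W` weakly biseparate `X` and `Y`. -/
def WeaklyBiseparate {α : Type*} (Z W X Y : Set α) : Prop :=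
  X ⊆ Z ∧ Y ⊆ W ∧ Z ∩ Y = ∅ ∧ W ∩ X = ∅

/-- `Z` and `W` biseparate `X` and `Y`. -/
def Biseparate {α : Type*} (Z W X Y : Set α) : Prop :=
  WeaklyBiseparate Z W X Y ∧ Z ∩ W = ∅

/-! ## Logical notions -/

variable {L : FirstOrder.Language}

/-- Provability: `φ` is a first-order consequence of `U` (by Gödel completeness,
semantic consequence). -/
def Prv (U : L.Theory) (φ : L.Sentence) : Prop := U ⊨ᵇ φ

/-- `U_p`: the set of theorems of `U`. -/
def Thms (U : L.Theory) : Set L.Sentence := {φ | Prv U φ}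

/-- `U_r`: the set of refutable sentences of `U`. -/
def Refut (U : L.Theory) : Set L.Sentence := {φ | Prv U ∼φ}

/-- Consistency: `U ⊬ ⊥`. -/
def Consistent (U : L.Theory) : Prop := ¬ Prv U ⊥

/-- `φ` is independent of `U`: `U` proves neither `φ` nor `¬φ`. -/
def Independent (U : L.Theory) (φ : L.Sentence) : Prop := ¬ Prv U φ ∧ ¬ Prv U ∼φ

/-- `U` is incomplete: some sentence is independent of it. -/
def Incomplete (U : L.Theory) : Prop := ∃ φ, Independent U φ

/-- Mono-consequence: `U ⊢_m φ` iff `ψ ⊢ φ` for some `ψ ∈ U`. -/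
def MPrv (U : L.Theory) (φ : L.Sentence) : Prop := ∃ ψ ∈ U, Prv {ψ} φ

/-- `U_m`: the set of mono-theorems of `U`. -/
def MThms (U : L.Theory) : Set L.Sentence := {φ | MPrv U φ}

/-- `U_n`: the set of mono-refutable sentences of `U`. -/
def MRefut (U : L.Theory) : Set L.Sentence := {φ | MPrv U ∼φ}

/-- Mono-consistency: every member is consistent by itself. -/
def MonoConsistent (U : L.Theory) : Prop := ∀ ψ ∈ U, Consistent ({ψ} : L.Theory)

/-- `Û`: the set of all non-empty finite conjunctions of elements of `U`. -/
def hat (U : L.Theory) : L.Theory :=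
  {φ | ∃ (ψ : L.Sentence) (l : List L.Sentence),
    ψ ∈ U ∧ (∀ χ ∈ l, χ ∈ U) ∧ φ = l.foldl (· ⊓ ·) ψ}

/-- `U ⋓ V`. -/
def Cup (U V : L.Theory) : L.Theory :=
  {χ | ∃ φ ∈ U, ∃ ψ ∈ V, χ = φ ⊓ ψ}

/-- `U ⋐ V`: for every `φ ∈ U` and `ψ ∈ V` there is `ρ ∈ V` with `ρ ⊢ φ ∧ ψ`. -/
def Ssub (U V : L.Theory) : Prop :=
  ∀ φ ∈ U, ∀ ψ ∈ V, ∃ ρ ∈ V, Prv {ρ} (φ ⊓ ψ)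

/-! ## Gödel numbering -/

/-- A Gödel numbering of the sentences of a (countable) signature: a bijective
coding of sentences by natural numbers that is effective for the basic syntactic
operations, and for which the theorems of a c.e. theory can be effectively
enumerated from an index of the theory. -/
structure Numbering (L : FirstOrder.Language) where
  equiv : L.Sentence ≃ ℕ
  neg_comp : Computable fun n => equiv ∼(equiv.symm n)
  inf_comp : Computable₂ fun m n => equiv (equiv.symm m ⊓ equiv.symm n)
  imp_comp : Computable₂ fun m n => equiv (equiv.symm m ⟹ equiv.symm n)
  iff_comp : Computable₂ fun m n => equiv (equiv.symm m ⇔ equiv.symm n)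
  thmIdx : ℕ → ℕ
  thmIdx_comp : Computable thmIdx
  thmIdx_spec : ∀ i, WSet (thmIdx i) = equiv '' Thms (equiv.symm '' WSet i)

namespace Numbering

variable (g : Numbering L)

/-- The code of a sentence. -/
def code (φ : L.Sentence) : ℕ := g.equiv φ

/-- The set of codes of a set of sentences. -/
def codes (S : Set L.Sentence) : Set ℕ := g.equiv '' S

/-- The theory axiomatised by the `i`-th c.e. set (identified with a set of
sentences via the numbering). -/
def thy (i : ℕ) : L.Theory := g.equiv.symm '' WSet i

/-- The theory `U` is computably enumerable (with respect to the numbering). -/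
def CEThy (U : L.Theory) : Prop := CE (g.codes U)

end Numbering



/-- `U` is effectively `X`-inseparable: a partial computable function uniformly
produces, from any pair of c.e. sets weakly biseparating `U_p` and `U_r`, a
sentence in `X` lying outside both. -/
def EffXInseparable (g : Numbering L) (U : L.Theory) (X : Set L.Sentence) : Prop :=
  ∃ Φ : ℕ → ℕ →. ℕ, Partrec₂ Φ ∧ ∀ i j,
    WeaklyBiseparate (WSet i) (WSet j) (g.codes (Thms U)) (g.codes (Refut U)) →
    ∃ n ∈ Φ i j, n ∈ g.codes X ∧ n ∉ WSet i ∪ WSet j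

/-- `U` is effectively essentially `X`-incomplete: from an index of any consistent
c.e. extension of `U` one can partial-computably find a sentence in `X`
independent of that extension. -/
def EffEssXIncomplete (g : Numbering L) (U : L.Theory) (X : Set L.Sentence) : Prop :=
  ∃ Φ : ℕ →. ℕ, Partrec Φ ∧ ∀ i,
    Thms U ⊆ Thms (g.thy i) → Consistent (g.thy i) →
    ∃ n ∈ Φ i, ∃ φ : L.Sentence, g.code φ = n ∧ φ ∈ X ∧ Independent (g.thy i) φ

/-- `Φ` witnesses that `U` is effectively if-essentially `F`-incomplete: whenever
`W i` is a consistent finite extension of `U` (as a set of axioms), `Φ i`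
converges to (the code of) a sentence in `F (W i)` independent of `W i`. -/
def IfEssWitness (g : Numbering L) (U : L.Theory)
    (F : Set L.Sentence → Set L.Sentence) (Φ : ℕ →. ℕ) : Prop :=
  ∀ i, (∃ Γ : Finset L.Sentence, g.thy i = U ∪ (Γ : Set L.Sentence)) →
    Consistent (g.thy i) →
    ∃ n ∈ Φ i, ∃ φ : L.Sentence, g.code φ = n ∧ φ ∈ F (g.thy i) ∧ Independent (g.thy i) φ

/-- `U` is effectively if-essentially `F`-incomplete. -/
def EffIfEssIncomplete (g : Numbering L) (U : L.Theory)
    (F : Set L.Sentence → Set L.Sentence) : Prop :=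
  ∃ Φ : ℕ →. ℕ, Partrec Φ ∧ IfEssWitness g U F Φ

/-- `U` is effectively essentially `X`-creative. -/
def EffEssXCreative (g : Numbering L) (U : L.Theory) (X : Set L.Sentence) : Prop :=
  ∃ Φ : ℕ → ℕ →. ℕ, Partrec₂ Φ ∧ ∀ i j,
    Thms U ⊆ Thms (g.thy i) → Consistent (g.thy i) →
    g.codes (Thms (g.thy i)) ∩ WSet j = ∅ →
    ∃ n ∈ Φ i j, n ∈ g.codes X ∧ n ∉ g.codes (Thms (g.thy i)) ∪ WSet j

/-! ## Helper lemmas -/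

theorem prv_contra {T : L.Theory} {φ : L.Sentence} (h₁ : Prv T φ) (h₂ : Prv T ∼φ) :
    Prv T ⊥ := by
  intro M v xs
  have a := h₁ M v xs
  have b := h₂ M v xs
  rw [BoundedFormula.realize_not] at b
  exact (b a).elim

theorem prv_of_mem {T : L.Theory} {φ : L.Sentence} (h : φ ∈ T) : Prv T φ :=
  Theory.models_sentence_of_mem h

theorem prv_mono {S T : L.Theory} (h : S ⊆ T) {φ : L.Sentence} (hφ : Prv S φ) : Prv T φ :=
  Theory.models_of_models_theory (fun _ hψ => prv_of_mem (h hψ)) hφ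

/-- If `U ∪ {φ}` is inconsistent then every model of `U` falsifies `φ`. -/
theorem not_realize_of_incons {U : L.Theory} {φ : L.Sentence} (h : ¬ Consistent (U ∪ {φ}))
    (M : Theory.ModelType U) : ¬ (M ⊨ φ) := by
  intro hM
  have h' : Prv (U ∪ {φ}) ⊥ := not_not.1 h
  have hm : M ⊨ U ∪ {φ} := by
    rw [Theory.model_iff]
    rintro ψ (hψ | hψ)
    · exact Theory.realize_sentence_of_mem U hψ
    · rw [Set.mem_singleton_iff.1 hψ]; exact hM
  have := Theory.ModelsBoundedFormula.realize_sentence h' M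
  exact this

theorem cons_add {U : L.Theory} {φ : L.Sentence} (h : ¬ Prv U ∼φ) : Consistent (U ∪ {φ}) := by
  by_contra hc
  exact h (Theory.models_sentence_iff.2 fun M =>
    (Sentence.realize_not M).2 (not_realize_of_incons hc M))

theorem cons_add_not {U : L.Theory} {φ : L.Sentence} (h : ¬ Prv U φ) :
    Consistent (U ∪ {∼φ}) := by
  by_contra hc
  refine h (Theory.models_sentence_iff.2 fun M => ?_)
  by_contra hM
  exact not_realize_of_incons hc M ((Sentence.realize_not M).2 hM)

theorem WSet_re : REPred fun q : ℕ × ℕ => q.2 ∈ WSet q.1 :=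
  (Nat.Partrec.Code.eval_part.comp ((Computable.ofNat Nat.Partrec.Code).comp Computable.fst)
    Computable.snd).dom_re

theorem re_comp {α β : Type*} [Primcodable α] [Primcodable β] {p : β → Prop} (hp : REPred p)
    {f : α → β} (hf : Computable f) : REPred fun a => p (f a) :=
  Partrec.comp hp hf

theorem re_or {α : Type*} [Primcodable α] {p q : α → Prop} (hp : REPred p) (hq : REPred q) :
    REPred fun a => p a ∨ q a := by
  obtain ⟨k, hk, H⟩ := Partrec.merge' hp hq
  refine hk.dom_re.of_eq fun a => ?_
  rw [(H a).2]
  simp [Part.assert]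

/-- Parametrised recursion theorem for c.e. sets. -/
theorem rec_index {P : ℕ × ℕ × ℕ → Prop} (hP : REPred P) :
    ∃ s : ℕ → ℕ, Computable s ∧ ∀ p, WSet (s p) = {x | P (s p, p, x)} := by
  have hc : Computable₂ fun (c : Nat.Partrec.Code) (y : ℕ) =>
      (Encodable.encode (c.curry y.unpair.1), y.unpair.1, y.unpair.2) := by
    have hu : Computable fun q : Nat.Partrec.Code × ℕ => q.2.unpair :=
      Computable.unpair.comp Computable.snd
    have h1 := Computable.fst.comp hu
    have h2 := Computable.snd.comp hu
    exact (Computable.encode.comp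
      (Nat.Partrec.Code.primrec₂_curry.to_comp.comp Computable.fst h1)).pair (h1.pair h2)
  have hF : Partrec₂ fun (c : Nat.Partrec.Code) (y : ℕ) =>
      (Part.assert (P (Encodable.encode (c.curry y.unpair.1), y.unpair.1, y.unpair.2))
        fun _ => Part.some ()).map fun _ => (0 : ℕ) :=
    Partrec.map (re_comp hP hc) (Computable.const 0).to₂
  obtain ⟨c, hc⟩ := Nat.Partrec.Code.fixed_point₂ hF
  refine ⟨fun p => Encodable.encode (c.curry p), Computable.encode.comp
    (Nat.Partrec.Code.primrec₂_curry.to_comp.comp (Computable.const c) Computable.id), fun p => ?_⟩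
  ext x
  simp [WSet, Nat.Partrec.Code.eval_curry, hc, Part.assert]

/-- The s-m-n theorem for c.e. sets. -/
theorem smn_index {P : ℕ × ℕ → Prop} (hP : REPred P) :
    ∃ s : ℕ → ℕ, Computable s ∧ ∀ p, WSet (s p) = {x | P (p, x)} :=
  rec_index (re_comp hP Computable.snd)

theorem WSet_thmIdx (g : Numbering L) (i n : ℕ) :
    n ∈ WSet (g.thmIdx i) ↔ Prv (g.thy i) (g.equiv.symm n) := by
  rw [g.thmIdx_spec]
  constructor
  · rintro ⟨φ, hφ, rfl⟩
    rw [Equiv.symm_apply_apply]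
    exact hφ
  · intro h
    exact ⟨_, h, by simp⟩

theorem mem_codes (g : Numbering L) (S : Set L.Sentence) (n : ℕ) :
    n ∈ g.codes S ↔ g.equiv.symm n ∈ S := by
  constructor
  · rintro ⟨φ, hφ, rfl⟩
    simpa using hφ
  · intro h
    exact ⟨_, h, by simp⟩

/-- Uniform enumerability of the refutable sentences. -/
theorem refut_re (g : Numbering L) :
    REPred fun q : ℕ × ℕ => Prv (g.thy q.1) ∼(g.equiv.symm q.2) := by
  refine (re_comp WSet_re ((g.thmIdx_comp.comp Computable.fst).pair
    (g.neg_comp.comp Computable.snd))).of_eq fun q => ?_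
  rw [WSet_thmIdx]
  simp

theorem exists_idx (g : Numbering L) {U : L.Theory} (hU : g.CEThy U) :
    ∃ u, g.thy u = U := by
  obtain ⟨u, hu⟩ := hU
  refine ⟨u, ?_⟩
  rw [Numbering.thy, ← hu, Numbering.codes]
  simp [Set.image_image]

theorem insep_to_creative (g : Numbering L) (U : L.Theory) (hU : g.CEThy U)
    (hcon : Consistent U) (X : Set L.Sentence) (h : EffXInseparable g U X) :
    EffEssXCreative g U X := by
  obtain ⟨Φ, hΦ, H⟩ := h
  obtain ⟨u, rfl⟩ := exists_idx g hU
  obtain ⟨s, hs, Hs⟩ := smn_index (P := fun q => q.2 ∈ WSet q.1 ∨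
    Prv (g.thy u) ∼(g.equiv.symm q.2))
    (re_or WSet_re (re_comp (refut_re g) ((Computable.const u).pair Computable.snd)))
  refine ⟨fun i j => Φ (g.thmIdx i) (s j), hΦ.comp (g.thmIdx_comp.comp Computable.fst)
    (hs.comp Computable.snd), fun i j hext hc hdis => ?_⟩
  have hdis' : ∀ n, Prv (g.thy i) (g.equiv.symm n) → n ∉ WSet j := by
    intro n hn hj
    have : n ∈ g.codes (Thms (g.thy i)) ∩ WSet j := ⟨(mem_codes g _ n).2 hn, hj⟩
    rw [hdis] at this
    exact this
  suffices hw : WeaklyBiseparate (WSet (g.thmIdx i)) (WSet (s j)) (g.codes (Thms (g.thy u)))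
      (g.codes (Refut (g.thy u))) by
    obtain ⟨n, hn, hX, hnot⟩ := H (g.thmIdx i) (s j) hw
    refine ⟨n, hn, hX, fun hbad => hnot ?_⟩
    rcases hbad with hb | hb
    · exact Or.inl ((WSet_thmIdx g i n).2 ((mem_codes g _ n).1 hb))
    · right
      rw [Hs]
      exact Or.inl hb
  refine ⟨?_, ?_, ?_, ?_⟩
  · intro n hn
    exact (WSet_thmIdx g i n).2 (hext ((mem_codes g _ n).1 hn))
  · intro n hn
    rw [Hs]
    exact Or.inr ((mem_codes g _ n).1 hn)
  · ext n
    simp only [Set.mem_inter_iff, Set.mem_empty_iff_false, iff_false, not_and]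
    intro h1 h2
    rw [mem_codes] at h2
    rw [WSet_thmIdx] at h1
    exact hc (prv_contra h1 (hext h2))
  · ext n
    simp only [Set.mem_inter_iff, Set.mem_empty_iff_false, iff_false, not_and]
    intro h1 h2
    rw [mem_codes] at h2
    rw [Hs] at h1
    rcases h1 with h1 | h1
    · exact hdis' n (hext h2) h1
    · exact hcon (prv_contra h2 h1)

theorem creative_to_incomplete (g : Numbering L) (U : L.Theory) (X : Set L.Sentence)
    (h : EffEssXCreative g U X) : EffEssXIncomplete g U X := by
  obtain ⟨Φ, hΦ, H⟩ := h
  obtain ⟨s, hs, Hs⟩ := smn_index (refut_re g)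
  refine ⟨fun i => Φ i (s i), hΦ.comp Computable.id hs, fun i hext hc => ?_⟩
  obtain ⟨n, hn, hX, hnot⟩ := H i (s i) hext hc (by
    ext n
    simp only [Set.mem_inter_iff, Set.mem_empty_iff_false, iff_false, not_and]
    intro h1 h2
    rw [mem_codes] at h1
    rw [Hs] at h2
    exact hc (prv_contra h1 h2))
  refine ⟨n, hn, g.equiv.symm n, by simp [Numbering.code], (mem_codes g _ n).1 hX, ?_, ?_⟩
  · exact fun hp => hnot (Or.inl ((mem_codes g _ n).2 hp))
  · intro hp
    refine hnot (Or.inr ?_)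
    rw [Hs]
    exact hp

theorem incomplete_to_ifEss (g : Numbering L) (U : L.Theory) (X : Set L.Sentence)
    (h : EffEssXIncomplete g U X) : EffIfEssIncomplete g U (fun _ => X) := by
  obtain ⟨Φ, hΦ, H⟩ := h
  refine ⟨Φ, hΦ, ?_⟩
  rintro i ⟨Γ, hΓ⟩ hc
  refine H i (fun φ hφ => prv_mono ?_ hφ) hc
  rw [hΓ]
  exact Set.subset_union_left

/-- The choice map: from `i, j, n` pick `n` if `n ∈ W_i`, or its negation if `n ∈ W_j`. -/
theorem exists_choice (g : Numbering L) : ∃ D : ℕ × ℕ × ℕ →. ℕ, Partrec D ∧ ∀ i j n,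
    (∀ m ∈ D (i, j, n), (n ∈ WSet i ∧ m = n) ∨
      (n ∈ WSet j ∧ m = g.equiv ∼(g.equiv.symm n))) ∧
    ((D (i, j, n)).Dom ↔ n ∈ WSet i ∨ n ∈ WSet j) := by
  have hA0 : REPred fun q : ℕ × ℕ × ℕ => q.2.2 ∈ WSet q.1 :=
    re_comp (f := fun q : ℕ × ℕ × ℕ => (q.1, q.2.2)) WSet_re
      (Computable.fst.pair (Computable.snd.comp Computable.snd))
  have hB0 : REPred fun q : ℕ × ℕ × ℕ => q.2.2 ∈ WSet q.2.1 :=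
    re_comp (f := fun q : ℕ × ℕ × ℕ => q.2) WSet_re Computable.snd
  have hid : Computable₂ fun (q : ℕ × ℕ × ℕ) (_ : Unit) => q.2.2 :=
    (Computable.snd.comp Computable.snd).comp Computable.fst
  have hA : Partrec fun q : ℕ × ℕ × ℕ =>
      (Part.assert (q.2.2 ∈ WSet q.1) fun _ => Part.some ()).map fun _ => q.2.2 :=
    Partrec.map hA0 hid
  have hneg : Computable₂ fun (q : ℕ × ℕ × ℕ) (_ : Unit) => g.equiv ∼(g.equiv.symm q.2.2) :=
    g.neg_comp.comp ((Computable.snd.comp Computable.snd).comp Computable.fst)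
  have hB : Partrec fun q : ℕ × ℕ × ℕ =>
      (Part.assert (q.2.2 ∈ WSet q.2.1) fun _ => Part.some ()).map
        fun _ => g.equiv ∼(g.equiv.symm q.2.2) :=
    Partrec.map hB0 hneg
  obtain ⟨D, hD, HD⟩ := Partrec.merge' hA hB
  refine ⟨D, hD, fun i j n => ⟨fun m hm => ?_, ?_⟩⟩
  · rcases (HD _).1 m hm with h | h
    · simp only [Part.mem_map_iff, Part.mem_assert_iff] at h
      obtain ⟨_, ⟨hi, -⟩, rfl⟩ := h
      exact Or.inl ⟨hi, rfl⟩
    · simp only [Part.mem_map_iff, Part.mem_assert_iff] at h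
      obtain ⟨_, ⟨hj, -⟩, rfl⟩ := h
      exact Or.inr ⟨hj, rfl⟩
  · rw [(HD _).2]
    simp [Part.assert]

theorem graph_re {K : ℕ × ℕ →. ℕ} (hK : Partrec K) :
    REPred fun q : ℕ × ℕ × ℕ => q.2.2 ∈ K (q.1, q.2.1) := by
  have heq : ComputablePred fun q : ℕ × ℕ => q.1 = q.2 :=
    ⟨inferInstance, (Primrec.eq (α := ℕ)).decide.to_comp⟩
  have h1 : Partrec fun q : ℕ × ℕ × ℕ => (K (q.1, q.2.1)).bind fun m =>
      Part.assert (m = q.2.2) fun _ => Part.some () := by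
    refine Partrec.bind (hK.comp (Computable.fst.pair (Computable.fst.comp Computable.snd))) ?_
    exact re_comp heq.to_re (Computable.snd.pair
      ((Computable.snd.comp Computable.snd).comp Computable.fst))
  refine h1.dom_re.of_eq fun q => ?_
  rw [Part.dom_iff_mem]
  simp [Part.mem_bind_iff, Part.mem_assert_iff]

/-- The self-referential theory `W_k = U ∪ {chosen sentence}`. -/
theorem exists_selfref (u : ℕ) {Φ : ℕ →. ℕ} (hΦ : Partrec Φ) {D : ℕ × ℕ × ℕ →. ℕ}
    (hD : Partrec D) : ∃ s : ℕ → ℕ → ℕ, Computable₂ s ∧ ∀ i j,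
      WSet (s i j) = WSet u ∪ {x | ∃ n ∈ Φ (s i j), x ∈ D (i, j, n)} := by
  let K : ℕ × ℕ →. ℕ := fun q => (Φ q.1).bind fun n => D (q.2.unpair.1, q.2.unpair.2, n)
  have hK : Partrec K := by
    have hu : Computable fun q : (ℕ × ℕ) × ℕ => q.1.2.unpair :=
      Computable.unpair.comp (Computable.snd.comp Computable.fst)
    refine Partrec.bind (hΦ.comp Computable.fst) ?_
    exact hD.comp ((Computable.fst.comp hu).pair ((Computable.snd.comp hu).pair Computable.snd))
  obtain ⟨s, hs, Hs⟩ := rec_index (re_or (re_comp WSet_re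
    ((Computable.const u).pair (Computable.snd.comp Computable.snd))) (graph_re hK))
  refine ⟨fun i j => s (Nat.pair i j), hs.comp
    (Primrec₂.natPair.to_comp.comp Computable.fst Computable.snd), fun i j => ?_⟩
  rw [Hs]
  ext x
  simp [K, Part.mem_bind_iff]

theorem ifEss_to_insep (g : Numbering L) (U : L.Theory) (hU : g.CEThy U)
    (hcon : Consistent U) (X : Set L.Sentence) (h : EffIfEssIncomplete g U (fun _ => X)) :
    EffXInseparable g U X := by
  obtain ⟨Φ, hΦ, H⟩ := h
  obtain ⟨u, rfl⟩ := exists_idx g hU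
  obtain ⟨D, hD, HD⟩ := exists_choice g
  obtain ⟨s, hs, Hs⟩ := exists_selfref u hΦ hD
  refine ⟨fun i j => Φ (s i j), hΦ.comp hs, ?_⟩
  rintro i j ⟨-, -, h3, h4⟩
  have h3' : ∀ n ∈ WSet i, ¬ Prv (g.thy u) ∼(g.equiv.symm n) := by
    intro n hn hp
    have : n ∈ WSet i ∩ g.codes (Refut (g.thy u)) := ⟨hn, (mem_codes g _ n).2 hp⟩
    rw [h3] at this
    exact this
  have h4' : ∀ n ∈ WSet j, ¬ Prv (g.thy u) (g.equiv.symm n) := by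
    intro n hn hp
    have : n ∈ WSet j ∩ g.codes (Thms (g.thy u)) := ⟨hn, (mem_codes g _ n).2 hp⟩
    rw [h4] at this
    exact this
  have hW0 := Hs i j
  change ∃ n ∈ Φ (s i j), n ∈ g.codes X ∧ n ∉ WSet i ∪ WSet j
  generalize s i j = k at hW0 ⊢
  have hW : g.thy k = g.thy u ∪ g.equiv.symm '' {x | ∃ n ∈ Φ k, x ∈ D (i, j, n)} := by
    rw [Numbering.thy, Numbering.thy, ← Set.image_union, hW0]
  have hconv : ∀ n ∈ Φ k, n ∉ WSet i ∪ WSet j := by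
    intro n hn hbad
    obtain ⟨m, hm⟩ := Part.dom_iff_mem.1 ((HD i j n).2.2 hbad)
    have hset : {x | ∃ n ∈ Φ k, x ∈ D (i, j, n)} = {m} := by
      ext x
      constructor
      · rintro ⟨n', hn', hx⟩
        obtain rfl := Part.mem_unique hn hn'
        exact Part.mem_unique hx hm
      · intro hx
        rw [Set.mem_singleton_iff.1 hx]
        exact ⟨n, hn, hm⟩
    rw [hset, Set.image_singleton] at hW
    have key : Consistent (g.thy u ∪ {g.equiv.symm m}) ∧
        (g.equiv.symm m = g.equiv.symm n ∨ g.equiv.symm m = ∼(g.equiv.symm n)) := by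
      rcases (HD i j n).1 m hm with ⟨hi, rfl⟩ | ⟨hj, rfl⟩
      · exact ⟨cons_add (h3' _ hi), Or.inl rfl⟩
      · rw [Equiv.symm_apply_apply]
        exact ⟨cons_add_not (h4' _ hj), Or.inr rfl⟩
    obtain ⟨n', hn', φ, hφ, -, hi1, hi2⟩ := H k ⟨{g.equiv.symm m}, by
      rw [hW, Finset.coe_singleton]⟩ (by rw [hW]; exact key.1)
    obtain rfl := Part.mem_unique hn hn'
    have hφ' : g.equiv.symm n = φ := by
      rw [← hφ]
      exact g.equiv.symm_apply_apply φ
    have hmem : Prv (g.thy k) (g.equiv.symm m) :=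
      prv_of_mem (by rw [hW]; exact Or.inr rfl)
    rw [hφ'] at key
    rcases key.2 with h | h <;> rw [h] at hmem
    · exact hi1 hmem
    · exact hi2 hmem
  have hempty : {x | ∃ n ∈ Φ k, x ∈ D (i, j, n)} = ∅ := by
    refine Set.eq_empty_of_forall_notMem ?_
    rintro x ⟨n, hn, hx⟩
    exact hconv n hn ((HD i j n).2.1 (Part.dom_iff_mem.2 ⟨x, hx⟩))
  rw [hempty, Set.image_empty, Set.union_empty] at hW
  obtain ⟨n, hn, φ, hφ, hX, -⟩ := H k ⟨∅, by rw [hW, Finset.coe_empty, Set.union_empty]⟩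
    (by rw [hW]; exact hcon)
  exact ⟨n, hn, ⟨φ, hX, hφ⟩, hconv _ hn⟩

/-- For a consistent c.e. theory `U` and a set `X` of sentences,
the following are equivalent: (a) `U` is effectively `X`-inseparable; (b) `U` is
effectively essentially `X`-creative; (c) `U` is effectively essentially
`X`-incomplete; (d) `U` is effectively if-essentially `X`-incomplete. -/
theorem statement9 {L : FirstOrder.Language} (g : Numbering L) (U : L.Theory)
    (hU : g.CEThy U) (hcon : Consistent U) (X : Set L.Sentence) :
    [EffXInseparable g U X,
     EffEssXCreative g U X,
     EffEssXIncomplete g U X,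
     EffIfEssIncomplete g U (fun _ => X)].TFAE := by
  tfae_have 1 → 2 := insep_to_creative g U hU hcon X
  tfae_have 2 → 3 := creative_to_incomplete g U X
  tfae_have 3 → 4 := incomplete_to_ifEss g U X
  tfae_have 4 → 1 := ifEss_to_insep g U hU hcon X
  tfae_finish

end PourEl
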